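/- arXiv:math/0012002 — 5 statements merged into one kernel-verified Lean document; each statement's English description precedes it below -/
import Mathlib

section
/- For each j = 1,…,n, the function H_j is a Hamiltonian for the rotation vector field X_j with respect to ω: for every z ∈ U and every w ∈ ℂⁿ, ω_z(X_j(z), w) = DH_j(z)[w], where DH_j(z) is the (real) Fréchet derivative of H_j at z. (This is the identity ι(X_j)ω = d(φ_j|z_j|²) from the proof of Corollary 1.3.) -/
/-!
Contracting `ω` with `X_j` leaves only the row `a = j`, and the factor `-2i` turns `-Im` into
`2 Re`, which gives
`ω_z(X_j, w) = 2 φ_j Re(z_j w̄_j) + 2 |z_j|² ∑_b φ_{jb} Re(z_b w̄_b)`.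
On the other side, `d|z_b|²[w] = 2 Re(z_b w̄_b)`, so the product and chain rules give the same
expression for `DH_j(z)[w]`, with `φ_{bj}` in place of `φ_{jb}`. The two agree by the symmetry of
the second derivative of the `C²` function `φ` (`pderiv'_comm`).
-/

open Complex

noncomputable section

/-- `x(z) = (|z₁|², …, |zₙ|²)`. -/
def sqNorms {n : ℕ} (z : Fin n → ℂ) : Fin n → ℝ := fun a => Complex.normSq (z a)

/-- The `a`-th partial derivative of a function on (an open subset of) `ℝⁿ`. -/
def pderiv' {n : ℕ} (φ : (Fin n → ℝ) → ℝ) (a : Fin n) (x : Fin n → ℝ) : ℝ :=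
  fderiv ℝ φ x (Pi.single a 1)

/-- The Hermitian matrix `h_{ab}(z) = δ_{ab}·φ_a(x(z)) + φ_{ab}(x(z))·conj(z_a)·z_b`. -/
def hermMat {n : ℕ} (φ : (Fin n → ℝ) → ℝ) (z : Fin n → ℂ) : Matrix (Fin n) (Fin n) ℂ :=
  Matrix.of fun a b =>
    ((if a = b then pderiv' φ a (sqNorms z) else 0 : ℝ) : ℂ)
      + (pderiv' (pderiv' φ b) a (sqNorms z) : ℂ) * (starRingEnd ℂ) (z a) * z b

/-- The Kähler form `ω_z(v,w) = −Im( Σ_{a,b} h_{ab}(z)·v_a·conj(w_b) )`. -/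
def kform {n : ℕ} (φ : (Fin n → ℝ) → ℝ) (z v w : Fin n → ℂ) : ℝ :=
  - (∑ a, ∑ b, hermMat φ z a b * v a * (starRingEnd ℂ) (w b)).im

/-- The generator `X_j(z)` of rotation in the `j`-th coordinate: `j`-th entry `−2i·z_j`,
other entries `0`. -/
def rotVF {n : ℕ} (j : Fin n) (z : Fin n → ℂ) : Fin n → ℂ :=
  Pi.single j (-(2 * Complex.I) * z j)

/-- The Hamiltonian `H_j(z) = φ_j(x(z))·|z_j|²`. -/
def Ham {n : ℕ} (φ : (Fin n → ℝ) → ℝ) (j : Fin n) (z : Fin n → ℂ) : ℝ :=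
  pderiv' φ j (sqNorms z) * Complex.normSq (z j)

/-- The real differential of `z ↦ |z|²` on `ℂ`, that is, `w ↦ 2 Re(z w̄)`. -/
def normSqDeriv (z : ℂ) : ℂ →L[ℝ] ℝ := (2 * z.re) • Complex.reCLM + (2 * z.im) • Complex.imCLM

lemma normSqDeriv_apply (z w : ℂ) : normSqDeriv z w = 2 * (z.re * w.re + z.im * w.im) := by
  simp [normSqDeriv]; ring

lemma hasFDerivAt_normSq_complex (z : ℂ) :
    HasFDerivAt (fun z : ℂ => Complex.normSq z) (normSqDeriv z) z := by
  have hr : HasFDerivAt (fun z : ℂ => z.re) Complex.reCLM z := Complex.reCLM.hasFDerivAt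
  have hi : HasFDerivAt (fun z : ℂ => z.im) Complex.imCLM z := Complex.imCLM.hasFDerivAt
  have h := (hr.mul hr).add (hi.mul hi)
  refine HasFDerivAt.congr_fderiv (h.congr_of_eventuallyEq
    (Filter.Eventually.of_forall fun y => Complex.normSq_apply y)) ?_
  ext w
  simp [normSqDeriv]; ring

lemma hasFDerivAt_normSq_coord {n : ℕ} (z : Fin n → ℂ) (a : Fin n) :
    HasFDerivAt (fun z : Fin n → ℂ => Complex.normSq (z a))
      ((normSqDeriv (z a)).comp (ContinuousLinearMap.proj a)) z :=
  (hasFDerivAt_normSq_complex (z a)).comp z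
    (ContinuousLinearMap.proj (R := ℝ) (φ := fun _ : Fin n => ℂ) a).hasFDerivAt

lemma hasFDerivAt_sqNorms {n : ℕ} (z : Fin n → ℂ) :
    HasFDerivAt (sqNorms (n := n))
      (ContinuousLinearMap.pi fun a => (normSqDeriv (z a)).comp (ContinuousLinearMap.proj a)) z :=
  hasFDerivAt_pi.2 fun a => hasFDerivAt_normSq_coord z a

lemma hasFDerivAt_pderiv' {n : ℕ} {φ : (Fin n → ℝ) → ℝ} {x : Fin n → ℝ}
    (hφ : ContDiffAt ℝ 2 φ x) (a : Fin n) :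
    HasFDerivAt (pderiv' φ a) ((fderiv ℝ (fderiv ℝ φ) x).flip (Pi.single a 1)) x := by
  have h : DifferentiableAt ℝ (fderiv ℝ φ) x :=
    (hφ.fderiv_right (m := 1) (by norm_num)).differentiableAt (by norm_num)
  have h' := h.hasFDerivAt.clm_apply (hasFDerivAt_const (Pi.single a 1 : Fin n → ℝ) x)
  refine HasFDerivAt.congr_fderiv (f := pderiv' φ a) h' ?_
  simp

/-- Symmetry of the mixed second partial derivatives of a `C²` function. -/
lemma pderiv'_comm {n : ℕ} {φ : (Fin n → ℝ) → ℝ} {x : Fin n → ℝ}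
    (hφ : ContDiffAt ℝ 2 φ x) (a b : Fin n) :
    pderiv' (pderiv' φ b) a x = pderiv' (pderiv' φ a) b x := by
  have hs : IsSymmSndFDerivAt ℝ φ x := hφ.isSymmSndFDerivAt (by simp)
  rw [pderiv', pderiv', (hasFDerivAt_pderiv' hφ a).fderiv, (hasFDerivAt_pderiv' hφ b).fderiv]
  exact hs _ _

lemma fderiv_eq_sum_pderiv' {n : ℕ} (f : (Fin n → ℝ) → ℝ) (x v : Fin n → ℝ) :
    fderiv ℝ f x v = ∑ b, v b * pderiv' f b x := by
  conv_lhs => rw [pi_eq_sum_univ' v]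
  simp [map_sum, pderiv']

/-- The product and chain rules for `H_j = (φ_j ∘ x) · |z_j|²`. The `C²` hypothesis is what makes
`φ_j` differentiable at `x(z)`, so that no `fderiv` takes its default value. -/
lemma fderiv_Ham {n : ℕ} {φ : (Fin n → ℝ) → ℝ} {z : Fin n → ℂ}
    (hφ : ContDiffAt ℝ 2 φ (sqNorms z)) (j : Fin n) (w : Fin n → ℂ) :
    fderiv ℝ (Ham φ j) z w =
      pderiv' φ j (sqNorms z) * normSqDeriv (z j) (w j) +
        Complex.normSq (z j) *
          ∑ b, normSqDeriv (z b) (w b) * pderiv' (pderiv' φ j) b (sqNorms z) := by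
  have hd : HasFDerivAt (pderiv' φ j) (fderiv ℝ (pderiv' φ j) (sqNorms z)) (sqNorms z) :=
    (hasFDerivAt_pderiv' hφ j).differentiableAt.hasFDerivAt
  have h := (hd.comp z (hasFDerivAt_sqNorms z)).mul (hasFDerivAt_normSq_coord z j)
  have h' : HasFDerivAt (Ham φ j) _ z := h
  rw [h'.fderiv]
  simp [fderiv_eq_sum_pderiv']

/-- The contraction `ι(X_j)ω`, a purely algebraic identity that needs no regularity of `φ`. -/
lemma kform_rotVF {n : ℕ} (φ : (Fin n → ℝ) → ℝ) (z : Fin n → ℂ) (j : Fin n) (w : Fin n → ℂ) :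
    kform φ z (rotVF j z) w =
      pderiv' φ j (sqNorms z) * normSqDeriv (z j) (w j) +
        Complex.normSq (z j) *
          ∑ b, normSqDeriv (z b) (w b) * pderiv' (pderiv' φ b) j (sqNorms z) := by
  have hrow : ∑ a, ∑ b, hermMat φ z a b * rotVF j z a * (starRingEnd ℂ) (w b) =
      ∑ b, hermMat φ z j b * (-(2 * Complex.I) * z j) * (starRingEnd ℂ) (w b) := by
    rw [Finset.sum_eq_single j]
    · simp [rotVF]
    · intro a _ ha
      simp [rotVF, ha]
    · simp
  have hterm : ∀ b, -(hermMat φ z j b * (-(2 * Complex.I) * z j) * (starRingEnd ℂ) (w b)).im =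
      (if j = b then pderiv' φ j (sqNorms z) * normSqDeriv (z j) (w j) else 0) +
        Complex.normSq (z j) *
          (normSqDeriv (z b) (w b) * pderiv' (pderiv' φ b) j (sqNorms z)) := by
    intro b
    by_cases h : j = b
    · subst h
      simp [hermMat, normSqDeriv_apply, Complex.normSq_apply]
      ring
    · simp [hermMat, h, normSqDeriv_apply, Complex.normSq_apply]
      ring
  rw [kform, hrow, Complex.im_sum, ← Finset.sum_neg_distrib, Finset.sum_congr rfl fun b _ => hterm b,
    Finset.sum_add_distrib, ← Finset.mul_sum]
  simp

/-- `H_j` is a Hamiltonian for the rotation vector field `X_j` with respect to `ω`: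
`ω_z(X_j(z), w) = DH_j(z)[w]`, i.e. `ι(X_j)ω = d(φ_j|z_j|²)`. -/
theorem rotation_field_is_hamiltonian {n : ℕ}
    (V : Set (Fin n → ℝ)) (hV : IsOpen V)
    (φ : (Fin n → ℝ) → ℝ) (hφ : ContDiffOn ℝ 2 φ V)
    (z : Fin n → ℂ) (hz : sqNorms z ∈ V) (j : Fin n) (w : Fin n → ℂ) :
    kform φ z (rotVF j z) w = fderiv ℝ (Ham φ j) z w := by
  have hφz : ContDiffAt ℝ 2 φ (sqNorms z) := hφ.contDiffAt (hV.mem_nhds hz)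
  rw [kform_rotVF, fderiv_Ham hφz]
  simp only [pderiv'_comm hφz j]
end
end

section
/- Let n ≥ 1. For all z ∈ ℂⁿ and w ∈ ℂⁿ, the determinant of the complex n×n matrix whose first n−1 columns are X₁(z) − X_{k+1}(z) for k = 1,…,n−1 and whose last column is w equals (−2i)^{n−1} · Σ_{k=1}^n w_k · ∏_{j≠k} z_j; equivalently, contracting the holomorphic n-form dz₁∧⋯∧dzₙ with the n−1 vector fields X₁ − X₂, …, X₁ − Xₙ yields (−2i)^{n−1} d(z₁⋯zₙ). (This is the contraction identity ι(X_{f₁},…,X_{f_{n−1}})Ω = ±(−2i)^{n−1} d(z₁⋯zₙ) from the proof of Corollary 1.3.) -/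
/-!
Write `c = -2i`. A cyclic permutation of the columns, of sign `(-1)^(n-1)`, moves `w` to the front.
The resulting matrix is `D * L` with its first column replaced by `w`, where `D = diag(c z)` and
`L` has columns `e₁, e₁ - e₂, …, e₁ - eₙ`. By Cramer's rule its determinant is the first
entry of `adj (D * L) w = adj L (adj D w)`. Since `L` is an involution, `adj L = det L • L`, with
`det L = (-1)^(n-1)` because `L` is triangular; the first row of `L` consists of ones, and
`adj D` is diagonal with entries `c^(n-1) ∏_{j ≠ k} z_j`. The two signs cancel. No division by
the coordinates of `z` occurs, so zero coordinates need no separate treatment.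
-/

open Complex

noncomputable section

/-- The matrix with columns `e₀, e₀ - e₁, …, e₀ - e_m`. -/
def diffMat (m : ℕ) : Matrix (Fin (m + 1)) (Fin (m + 1)) ℂ :=
  Matrix.of fun a b => if a = 0 then 1 else if a = b then -1 else 0

lemma diffMat_mul_self (m : ℕ) : diffMat m * diffMat m = 1 := by
  ext a b
  rw [Matrix.mul_apply, Fin.sum_univ_succ]
  refine Fin.cases ?_ (fun a => ?_) a <;> refine Fin.cases ?_ (fun b => ?_) b <;>
    simp [diffMat, Matrix.one_apply, Fin.succ_ne_zero, (Fin.succ_ne_zero _).symm]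
  split_ifs <;> simp

lemma det_diffMat (m : ℕ) : (diffMat m).det = (-1) ^ m := by
  rw [Matrix.det_of_isUpperTriangular, Fin.prod_univ_succ]
  · simp [diffMat, Fin.succ_ne_zero]
  · intro a b hab
    have hab' : b < a := hab
    simp [diffMat, (lt_of_le_of_lt (Fin.zero_le b) hab').ne', hab'.ne']

lemma adjugate_diffMat (m : ℕ) : (diffMat m).adjugate = (-1 : ℂ) ^ m • diffMat m := by
  calc (diffMat m).adjugate = (diffMat m).adjugate * (diffMat m * diffMat m) := by
        rw [diffMat_mul_self, mul_one]
    _ = (-1 : ℂ) ^ m • diffMat m := by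
        rw [← mul_assoc, Matrix.adjugate_mul, det_diffMat, Matrix.smul_mul, one_mul]

/-- The contraction identity with `w` moved to the first column. -/
lemma det_updateCol_diagonal_mul_diffMat (m : ℕ) (c : ℂ) (z w : Fin (m + 1) → ℂ) :
    ((Matrix.diagonal (fun i => c * z i) * diffMat m).updateCol 0 w).det
      = (-1) ^ m * (c ^ m * ∑ k, w k * ∏ j ∈ Finset.univ.erase k, z j) := by
  rw [← Matrix.cramer_apply, Matrix.cramer_eq_adjugate_mulVec, Matrix.adjugate_mul_distrib,
    adjugate_diffMat, Matrix.adjugate_diagonal, Matrix.smul_mul, Matrix.smul_mulVec,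
    Pi.smul_apply, smul_eq_mul, ← Matrix.mulVec_mulVec, Matrix.mulVec, dotProduct]
  congr 1
  rw [Finset.mul_sum]
  refine Finset.sum_congr rfl fun k _ => ?_
  rw [Matrix.mulVec_diagonal, Finset.prod_mul_distrib, Finset.prod_const,
    Finset.card_erase_of_mem (Finset.mem_univ k)]
  simp [diffMat]
  ring

/-- Contracting `dz₁∧⋯∧dzₙ` with the vector fields `X₁ − X₂, …, X₁ − Xₙ` yields
`(−2i)^{n−1} d(z₁⋯zₙ)`: the determinant of the matrix whose first `n−1` columns are
`X₁(z) − X_{k+1}(z)` and whose last column is `w` equals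
`(−2i)^{n−1} · Σ_k w_k · ∏_{j≠k} z_j`. -/
theorem contraction_of_holomorphic_form (n : ℕ) (hn : 1 ≤ n) (z w : Fin n → ℂ) :
    (Matrix.of fun a b : Fin n =>
        if h : (b : ℕ) + 1 < n then
          (rotVF ⟨0, hn⟩ z - rotVF ⟨(b : ℕ) + 1, h⟩ z) a
        else w a).det
      = (-(2 * Complex.I)) ^ (n - 1) *
          ∑ k, w k * ∏ j ∈ Finset.univ.erase k, z j := by
  obtain ⟨m, rfl⟩ : ∃ m, n = m + 1 := ⟨n - 1, by omega⟩
  have key : (Matrix.of fun a b : Fin (m + 1) =>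
        if h : (b : ℕ) + 1 < m + 1 then
          (rotVF ⟨0, hn⟩ z - rotVF ⟨(b : ℕ) + 1, h⟩ z) a
        else w a) =
      ((Matrix.diagonal (fun i => -(2 * Complex.I) * z i) * diffMat m).updateCol 0 w).submatrix
        id (finRotate (m + 1)) := by
    ext a b
    refine Fin.lastCases ?_ (fun b => ?_) b
    · simp
    · have hb : finRotate (m + 1) b.castSucc = b.succ := by
        rw [finRotate_apply, Fin.coeSucc_eq_succ]
      have e : (⟨(b : ℕ) + 1, by omega⟩ : Fin (m + 1)) = b.succ := rfl
      rw [Matrix.submatrix_apply, hb, Matrix.updateCol_ne (Fin.succ_ne_zero b),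
        Matrix.diagonal_mul]
      refine Fin.cases ?_ (fun a => ?_) a
      · simp [rotVF, diffMat, e, Pi.single_apply, (Fin.succ_ne_zero _).symm]
      · by_cases hab : a = b
        · subst hab
          simp [rotVF, diffMat, e, Pi.single_apply, Fin.succ_ne_zero]
        · simp [rotVF, diffMat, e, Pi.single_apply, Fin.succ_ne_zero, hab]
  rw [key, Matrix.det_permute', det_updateCol_diagonal_mul_diffMat, sign_finRotate]
  push_cast
  rw [← mul_assoc, ← mul_pow]
  simp
end
end

section
/- Assume the Hermitian matrix (h_{ab}(z)) is positive definite for every z ∈ U (so Φ is strictly plurisubharmonic and ω is a Kähler form). Define f : U → ℝⁿ by f(z) = ( H₁(z) − H₂(z), …, H₁(z) − Hₙ(z), Im(i^{n+1}·z₁⋯zₙ) ). If z ∈ U is such that the real Fréchet derivative Df(z) : ℂⁿ → ℝⁿ is surjective, then the kernel of Df(z) is ω_z-isotropic: ω_z(v, w) = 0 for all v, w ∈ ker Df(z). (This is the Lagrangian part of Corollary 1.3: the fibres of f are Lagrangian with respect to ω at their smooth points.) -/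
/-!
The torus field `X_t = (i t₁ z₁, …, i tₙ zₙ)` is Hamiltonian for `½ ∑ t_j H_j` (`kform_rot`).
On `K = ker Df(z)` all the `dH_j` agree, so `ω(v, X_t) = 0` for `v ∈ K` as soon as `∑ t_j = 0`.
For such `t`, `X_t` itself lies in `K`: the `H_j` are torus invariant (`dHam_rot`), and `z₁⋯zₙ` is
invariant under rotations of total weight zero (`dPhase_rot`). Surjectivity of `Df(z)` makes
`dH₁ - dH_j`, `j ≥ 2`, linearly independent, hence `t ↦ X_t` is injective on `{∑ t_j = 0}`.
So `K`, of real dimension `2n - n = n`, contains an `(n-1)`-dimensional subspace `ω`-orthogonal to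
`K`. If `ω(v, w) ≠ 0` for some `v, w ∈ K`, adjoining `v` and `w` to this subspace would give an
`(n+1)`-dimensional subspace of `K`.
-/

open Complex
open scoped ComplexOrder

noncomputable section

/-- The special Lagrangian fibration
`f(z) = (H₁(z) − H₂(z), …, H₁(z) − Hₙ(z), Im(i^{n+1}·z₁⋯zₙ))` of Corollary 1.3. -/
def slFib {n : ℕ} (φ : (Fin n → ℝ) → ℝ) (z : Fin n → ℂ) : Fin n → ℝ :=
  fun b =>
    if h : (b : ℕ) + 1 < n then
      Ham φ ⟨0, by omega⟩ z - Ham φ ⟨(b : ℕ) + 1, h⟩ z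
    else (Complex.I ^ (n + 1) * ∏ j, z j).im

/-- The differential of `w ↦ |w_a|²` at `z`, namely `v ↦ 2 Re(conj(z_a) v_a)`. -/
def dNormSq {n : ℕ} (z : Fin n → ℂ) (a : Fin n) : (Fin n → ℂ) →L[ℝ] ℝ :=
  (2 * (z a).re) • (Complex.reCLM ∘L ContinuousLinearMap.proj a)
    + (2 * (z a).im) • (Complex.imCLM ∘L ContinuousLinearMap.proj a)

lemma dNormSq_apply {n : ℕ} (z v : Fin n → ℂ) (a : Fin n) :
    dNormSq z a v = 2 * (z a).re * (v a).re + 2 * (z a).im * (v a).im := by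
  simp [dNormSq]

lemma hasFDerivAt_normSq {n : ℕ} (z : Fin n → ℂ) (a : Fin n) :
    HasFDerivAt (fun w : Fin n → ℂ => Complex.normSq (w a)) (dNormSq z a) z := by
  have hre : HasFDerivAt (fun w : Fin n → ℂ => (w a).re)
      (Complex.reCLM ∘L ContinuousLinearMap.proj a) z :=
    (Complex.reCLM ∘L (ContinuousLinearMap.proj (R := ℝ) (φ := fun _ : Fin n => ℂ) a)).hasFDerivAt
  have him : HasFDerivAt (fun w : Fin n → ℂ => (w a).im)
      (Complex.imCLM ∘L ContinuousLinearMap.proj a) z :=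
    (Complex.imCLM ∘L (ContinuousLinearMap.proj (R := ℝ) (φ := fun _ : Fin n => ℂ) a)).hasFDerivAt
  have h := (hre.mul hre).add (him.mul him)
  simp only [Complex.normSq_apply]
  refine h.congr_fderiv ?_
  ext v
  simp [dNormSq_apply]
  ring

lemma differentiableAt_pderiv {n : ℕ} {V : Set (Fin n → ℝ)} (hV : IsOpen V)
    {φ : (Fin n → ℝ) → ℝ} (hφ : ContDiffOn ℝ 2 φ V) {x : Fin n → ℝ} (hx : x ∈ V) (j : Fin n) :
    DifferentiableAt ℝ (pderiv' φ j) x := by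
  have h1 : ContDiffAt ℝ 1 (fderiv ℝ φ) x :=
    (hφ.contDiffAt (hV.mem_nhds hx)).fderiv_right (by norm_num)
  exact (h1.differentiableAt (by norm_num)).clm_apply (differentiableAt_const _)

/-- The differential of `H_j` at `z`, by the product and chain rules. -/
def dHam {n : ℕ} (φ : (Fin n → ℝ) → ℝ) (j : Fin n) (z : Fin n → ℂ) : (Fin n → ℂ) →L[ℝ] ℝ :=
  pderiv' φ j (sqNorms z) • dNormSq z j
    + Complex.normSq (z j) • ∑ a, pderiv' (pderiv' φ j) a (sqNorms z) • dNormSq z a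

lemma hasFDerivAt_Ham {n : ℕ} {φ : (Fin n → ℝ) → ℝ} {z : Fin n → ℂ} {j : Fin n}
    (h : DifferentiableAt ℝ (pderiv' φ j) (sqNorms z)) :
    HasFDerivAt (Ham φ j) (dHam φ j z) z := by
  have hs : HasFDerivAt (sqNorms : (Fin n → ℂ) → Fin n → ℝ)
      (ContinuousLinearMap.pi fun a => dNormSq z a) z :=
    hasFDerivAt_pi.2 fun a => hasFDerivAt_normSq z a
  refine ((h.hasFDerivAt.comp z hs).mul (hasFDerivAt_normSq z j)).congr_fderiv ?_
  ext v
  simp only [dHam, add_apply, smul_apply, ContinuousLinearMap.comp_apply, smul_eq_mul,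
    sum_apply, Function.comp]
  congr 2
  conv_lhs => rw [pi_eq_sum_univ' (ContinuousLinearMap.pi (fun a => dNormSq z a) v)]
  simp only [map_sum, map_smul, smul_eq_mul, ContinuousLinearMap.pi_apply]
  refine Finset.sum_congr rfl fun a _ => ?_
  rw [mul_comm, pderiv']

/-- The differential of `w ↦ Im(i^{n+1} w₁⋯wₙ)` at `z`. -/
def dPhase {n : ℕ} (z : Fin n → ℂ) : (Fin n → ℂ) →L[ℝ] ℝ :=
  Complex.imCLM ∘L ((Complex.I ^ (n + 1)) •
    ∑ i, (∏ j ∈ Finset.univ.erase i, z j) • ContinuousLinearMap.proj (R := ℝ) i)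

lemma hasFDerivAt_phase {n : ℕ} (z : Fin n → ℂ) :
    HasFDerivAt (fun w : Fin n → ℂ => (Complex.I ^ (n + 1) * ∏ j, w j).im) (dPhase z) z := by
  have h : HasFDerivAt (fun w : Fin n → ℂ => ∏ j, w j)
      (∑ i, (∏ j ∈ Finset.univ.erase i, z j) • ContinuousLinearMap.proj (R := ℝ) i) z :=
    hasFDerivAt_finsetProd
  exact Complex.imCLM.hasFDerivAt.comp z (h.const_mul (Complex.I ^ (n + 1)))

/-- The value at `z` of the vector field generating the torus action with weights `t`:
`t ↦ (i t₁ z₁, …, i tₙ zₙ)`. -/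
def rot {n : ℕ} (z : Fin n → ℂ) : (Fin n → ℝ) →ₗ[ℝ] (Fin n → ℂ) where
  toFun t := fun j => t j * (Complex.I * z j)
  map_add' s t := by ext j; simp [add_mul]
  map_smul' c t := by ext j; simp [mul_assoc]

lemma rot_apply {n : ℕ} (z : Fin n → ℂ) (t : Fin n → ℝ) (j : Fin n) :
    rot z t j = t j * (Complex.I * z j) := rfl

lemma dNormSq_rot {n : ℕ} (z : Fin n → ℂ) (t : Fin n → ℝ) (a : Fin n) :
    dNormSq z a (rot z t) = 0 := by
  simp [dNormSq_apply, rot_apply]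
  ring

lemma dHam_rot {n : ℕ} (φ : (Fin n → ℝ) → ℝ) (z : Fin n → ℂ) (t : Fin n → ℝ) (j : Fin n) :
    dHam φ j z (rot z t) = 0 := by
  simp [dHam, dNormSq_rot]

/-- Rotations of total weight zero preserve `z₁⋯zₙ`. -/
lemma dPhase_rot {n : ℕ} (z : Fin n → ℂ) (t : Fin n → ℝ) (ht : ∑ j, t j = 0) :
    dPhase z (rot z t) = 0 := by
  have h : ∑ i, (∏ j ∈ Finset.univ.erase i, z j) * rot z t i = 0 := by
    have h1 : ∀ i, (∏ j ∈ Finset.univ.erase i, z j) * rot z t i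
        = (t i : ℂ) * (Complex.I * ∏ j, z j) := fun i => by
      rw [← Finset.prod_erase_mul _ _ (Finset.mem_univ i), rot_apply]; ring
    simp_rw [h1]
    rw [← Finset.sum_mul, ← Complex.ofReal_sum, ht]
    simp
  simp [dPhase, h]

/-- `ω_z(v, ·)` as a real linear functional. -/
def kformL {n : ℕ} (φ : (Fin n → ℝ) → ℝ) (z v : Fin n → ℂ) : (Fin n → ℂ) →ₗ[ℝ] ℝ where
  toFun w := kform φ z v w
  map_add' x y := by
    simp only [kform, Pi.add_apply, map_add, mul_add, Finset.sum_add_distrib, Complex.add_im]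
    ring
  map_smul' c x := by
    have h : ∀ a b, hermMat φ z a b * v a * (starRingEnd ℂ) ((c • x) b)
        = (c : ℂ) * (hermMat φ z a b * v a * (starRingEnd ℂ) (x b)) := fun a b => by
      simp; ring
    simp only [kform, h, ← Finset.mul_sum, Complex.im_ofReal_mul]
    simp

lemma kform_swap {n : ℕ} {φ : (Fin n → ℝ) → ℝ} {z : Fin n → ℂ}
    (h : (hermMat φ z).IsHermitian) (v w : Fin n → ℂ) : kform φ z v w = - kform φ z w v := by
  have h1 : (starRingEnd ℂ) (∑ a, ∑ b, hermMat φ z a b * v a * (starRingEnd ℂ) (w b))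
      = ∑ a, ∑ b, hermMat φ z a b * w a * (starRingEnd ℂ) (v b) := by
    rw [Finset.sum_comm]
    simp only [map_sum, map_mul, Complex.conj_conj]
    refine Finset.sum_congr rfl fun a _ => Finset.sum_congr rfl fun b _ => ?_
    have := h.apply a b
    rw [← this]
    simp only [Complex.star_def]
    ring
  rw [kform, kform, ← h1, Complex.conj_im, neg_neg]

/-- Moment map identity: `½ ∑ t_j H_j` is a Hamiltonian for the rotation field of weights `t`. -/
lemma kform_rot {n : ℕ} (φ : (Fin n → ℝ) → ℝ) (z v : Fin n → ℂ) (t : Fin n → ℝ) :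
    kform φ z v (rot z t) = (∑ j, t j * dHam φ j z v) / 2 := by
  rw [kform, Finset.sum_comm, Complex.im_sum, ← Finset.sum_neg_distrib, Finset.sum_div]
  refine Finset.sum_congr rfl fun b _ => ?_
  have h : ∀ a, (hermMat φ z a b * v a * (starRingEnd ℂ) (rot z t b)).im =
      -(t b * ((if a = b then pderiv' φ b (sqNorms z) * dNormSq z b v else 0)
        + Complex.normSq (z b) * (pderiv' (pderiv' φ b) a (sqNorms z) * dNormSq z a v)) / 2) := by
    intro a
    rw [rot_apply, dNormSq_apply, dNormSq_apply, Complex.normSq_apply]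
    by_cases hab : a = b
    · subst hab
      simp [hermMat]
      ring
    · simp [hermMat, hab]
      ring
  rw [Complex.im_sum]
  simp only [h]
  rw [Finset.sum_neg_distrib, neg_neg, ← Finset.sum_div, ← Finset.mul_sum, Finset.sum_add_distrib]
  simp [dHam, Finset.mul_sum]

/-- The Lagrangian part of Corollary 1.3: at a point where `Df(z)` is surjective, the
kernel of `Df(z)` (the tangent space to the fibre of `f`) is `ω_z`-isotropic. -/
theorem fibres_are_lagrangian {n : ℕ}
    (V : Set (Fin n → ℝ)) (hV : IsOpen V)
    (φ : (Fin n → ℝ) → ℝ) (hφ : ContDiffOn ℝ 2 φ V)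
    (hpos : ∀ z : Fin n → ℂ, sqNorms z ∈ V → (hermMat φ z).PosDef)
    (z : Fin n → ℂ) (hz : sqNorms z ∈ V)
    (hsurj : Function.Surjective ⇑(fderiv ℝ (slFib φ) z))
    (v w : Fin n → ℂ)
    (hv : fderiv ℝ (slFib φ) z v = 0) (hw : fderiv ℝ (slFib φ) z w = 0) :
    kform φ z v w = 0 := by
  rcases n with _ | m
  · simp [kform]
  have hH : ∀ j, HasFDerivAt (Ham φ j) (dHam φ j z) z := fun j =>
    hasFDerivAt_Ham (differentiableAt_pderiv hV hφ hz j)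
  set D : (Fin (m + 1) → ℂ) →L[ℝ] (Fin (m + 1) → ℝ) := fderiv ℝ (slFib φ) z with hD
  have hDb : ∀ u (b : Fin (m + 1)), D u b =
      if h : (b : ℕ) + 1 < m + 1 then dHam φ 0 z u - dHam φ ⟨(b : ℕ) + 1, h⟩ z u
      else dPhase z u := by
    have h1 : HasFDerivAt (slFib φ) (ContinuousLinearMap.pi fun b : Fin (m + 1) =>
        if h : (b : ℕ) + 1 < m + 1 then dHam φ 0 z - dHam φ ⟨(b : ℕ) + 1, h⟩ z
        else dPhase z) z := by
      refine hasFDerivAt_pi.2 fun b => ?_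
      by_cases h : (b : ℕ) + 1 < m + 1
      · simp only [slFib, h, dif_pos]
        exact (hH 0).sub (hH _)
      · simp only [slFib, h, dif_neg, not_false_eq_true]
        exact hasFDerivAt_phase z
    intro u b
    rw [hD, h1.fderiv, ContinuousLinearMap.pi_apply]
    split_ifs <;> simp
  have hcast : ∀ u (i : Fin m), D u i.castSucc = dHam φ 0 z u - dHam φ i.succ z u := by
    intro u i
    rw [hDb, dif_pos (by simp)]
    rfl
  let K : Submodule ℝ (Fin (m + 1) → ℂ) := LinearMap.ker D.toLinearMap
  -- weights of total zero
  let T : Submodule ℝ (Fin (m + 1) → ℝ) :=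
    LinearMap.ker (∑ j, LinearMap.proj j : (Fin (m + 1) → ℝ) →ₗ[ℝ] ℝ)
  have hT : ∀ t : T, ∑ j, t.1 j = 0 := fun t => by
    have h := LinearMap.mem_ker.1 t.2
    simpa only [sum_apply, LinearMap.coe_sum, Finset.sum_apply, LinearMap.proj_apply] using h
  have hrotK : ∀ t : T, D (rot z t.1) = 0 := by
    intro t
    ext b
    rw [hDb]
    split_ifs <;> simp [dHam_rot, dPhase_rot z t.1 (hT t)]
  have hsum : ∀ u (t : T), ∑ j, t.1 j * dHam φ j z u
      = - ∑ i : Fin m, t.1 i.succ * D u i.castSucc := by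
    intro u t
    have h0 := hT t
    rw [Fin.sum_univ_succ] at h0 ⊢
    simp only [hcast, mul_sub, Finset.sum_sub_distrib, ← Finset.sum_mul]
    linear_combination dHam φ 0 z u * h0
  have horth : ∀ u, D u = 0 → ∀ t : T, kform φ z u (rot z t.1) = 0 := by
    intro u hu t
    rw [kform_rot, hsum, hu]
    simp
  have hinj : ∀ t : T, rot z t.1 = 0 → t = 0 := by
    intro t ht
    -- test against `u` with `(dH₁ - dH_j)(u) = t_j` for `j ≥ 2`, which gives `∑ t_j ^ 2 = 0`
    obtain ⟨u, hu⟩ := hsurj (Fin.snoc (fun i : Fin m => t.1 i.succ) 0)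
    have h1 := kform_rot φ z u t.1
    rw [ht, hsum, hu] at h1
    have h2 : kform φ z u 0 = 0 := (kformL φ z u).map_zero
    simp only [Fin.snoc_castSucc, h2] at h1
    have h3 : ∑ i : Fin m, t.1 i.succ * t.1 i.succ = 0 := by linarith
    rw [Finset.sum_eq_zero_iff_of_nonneg fun i _ => mul_self_nonneg _] at h3
    have h4 : ∀ i : Fin m, t.1 i.succ = 0 := fun i => mul_self_eq_zero.1 (h3 i (Finset.mem_univ i))
    have h0 := hT t
    rw [Fin.sum_univ_succ] at h0
    simp only [h4, Finset.sum_const_zero, add_zero] at h0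
    ext j
    exact Fin.cases h0 h4 j
  have hself : ∀ u, kform φ z u u = 0 := fun u => by
    linarith [kform_swap (hpos z hz).isHermitian u u]
  by_contra hne
  let L : (T × ℝ × ℝ) →ₗ[ℝ] K := LinearMap.codRestrict K
    (((rot z).comp T.subtype).coprod
      ((LinearMap.toSpanSingleton ℝ _ v).coprod (LinearMap.toSpanSingleton ℝ _ w))) (by
      rintro ⟨t, r, s⟩
      simp [K, hrotK, hv, hw])
  have hL : ∀ t r s, ((L (t, r, s) : K) : Fin (m + 1) → ℂ) = rot z t.1 + (r • v + s • w) :=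
    fun t r s => by simp [L]
  have hLinj : Function.Injective L := by
    rw [← LinearMap.ker_eq_bot, LinearMap.ker_eq_bot']
    rintro ⟨t, r, s⟩ h
    have h1 : rot z t.1 + (r • v + s • w) = 0 := by rw [← hL, h]; rfl
    have hs : s = 0 := by
      have h2 : kform φ z v (rot z t.1) + (r * kform φ z v v + s * kform φ z v w) = 0 := by
        have h3 := congrArg (kformL φ z v) h1
        simp only [map_add, map_smul, map_zero] at h3
        exact h3
      rw [horth v hv, hself] at h2
      simpa [hne] using h2
    have hr : r = 0 := by
      have h2 : kform φ z w (rot z t.1) + (r * kform φ z w v + s * kform φ z w w) = 0 := by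
        have h3 := congrArg (kformL φ z w) h1
        simp only [map_add, map_smul, map_zero] at h3
        exact h3
      rw [horth w hw, hself, kform_swap (hpos z hz).isHermitian w v] at h2
      simpa [hne] using h2
    have ht : t = 0 := hinj t (by simpa [hs, hr] using h1)
    simp [ht, hr, hs]
  have hdim := LinearMap.finrank_le_finrank_of_injective hLinj
  have hK : m + 1 + Module.finrank ℝ K = (m + 1) * 2 := by
    have h := LinearMap.finrank_range_add_finrank_ker D.toLinearMap
    rw [LinearMap.range_eq_top.2 hsurj] at h
    simpa [Module.finrank_pi_fintype, Complex.finrank_real_complex] using h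
  have hTdim : m ≤ Module.finrank ℝ T := by
    have h := LinearMap.finrank_range_add_finrank_ker
      (∑ j, LinearMap.proj j : (Fin (m + 1) → ℝ) →ₗ[ℝ] ℝ)
    have h' := Submodule.finrank_le
      (LinearMap.range (∑ j, LinearMap.proj j : (Fin (m + 1) → ℝ) →ₗ[ℝ] ℝ))
    simp only [Module.finrank_fin_fun, Module.finrank_self] at h h'
    change _ + Module.finrank ℝ T = _ at h
    omega
  simp only [Module.finrank_prod, Module.finrank_self] at hdim
  omega
end
end

section
/- Assume the Hermitian matrix (h_{ab}(z)) is positive definite for every z ∈ U (so Φ is strictly plurisubharmonic and ω is a Kähler form). Define f : U → ℝⁿ by f(z) = ( H₁(z) − H₂(z), …, H₁(z) − Hₙ(z), Im(i^{n+1}·z₁⋯zₙ) ). If z ∈ U is such that the real Fréchet derivative Df(z) : ℂⁿ → ℝⁿ is surjective, then for all v₁,…,vₙ ∈ ker Df(z) one has Im det(M) = 0, where M is the complex n×n matrix whose (a,b) entry is the a-th coordinate of v_b. (This is the 'special' part of Corollary 1.3: Im Ω vanishes on the fibres of f, where Ω = dz₁∧⋯∧dzₙ, so the fibres of f are special Lagrangian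 with respect to ω and Ω at their smooth points.) -/
/-!
The torus `{θ : ∑ θ_a = 0}` acts by `z_a ↦ exp(iθ_a) z_a` and preserves every component of `f`, so
its infinitesimal generators `(iθ_a z_a)_a` lie in `L = ker Df(z)`; here only the invariance of the
`|z_a|²` and of `Q = z₁⋯zₙ` is used. Surjectivity of `Df(z)` gives `dim L = n` and `dQ ≠ 0`, so some
cofactor `Q_k = ∏_{a ≠ k} z_a` is nonzero. The `n - 1` generators `τ_j = i(z_j e_j - z_k e_k)`,
together with one `w ∈ L` satisfying `dQ(w) ≠ 0`, form a matrix `N` with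
`det N = i^{n-1} dQ(w) = -i^{n+1} dQ(w)` (`det_torusMat`), which is real because the last
component of `Df(z) w` is `Im (i^{n+1} dQ(w)) = 0`. As `det N ≠ 0`, the columns of `N` are a real
basis of `L`, so any `n` vectors of `L` have determinant `det N` times a real number. If no such `w`
exists, then `dQ` vanishes on `L` and any `n` vectors of `L` have determinant `0`.
-/


open Complex
open scoped ComplexOrder

noncomputable section

/-- The cofactor `∏_{j ≠ a} z_j`, i.e. the partial derivative `∂(z₁⋯zₙ)/∂z_a`. -/
def cof {n : ℕ} (z : Fin n → ℂ) (a : Fin n) : ℂ := ∏ j ∈ Finset.univ.erase a, z j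

/-- The complex differential of `z₁⋯zₙ` at `z`, applied to `v`. -/
def dProd {n : ℕ} (z v : Fin n → ℂ) : ℂ := ∑ a, cof z a * v a

lemma cof_mul {n : ℕ} (z : Fin n → ℂ) (a : Fin n) : cof z a * z a = ∏ j, z j :=
  Finset.prod_erase_mul _ _ (Finset.mem_univ a)

/-- The matrix with column `w` in position `k` and, in position `j ≠ k`, the generator
`i(z_j e_j - z_k e_k)` of the torus action. -/
def torusMat {n : ℕ} (z w : Fin n → ℂ) (k : Fin n) : Matrix (Fin n) (Fin n) ℂ :=
  Matrix.of fun a j =>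
    if j = k then w a
    else I * (((Pi.single j 1 - Pi.single k 1 : Fin n → ℝ) a : ℝ) : ℂ) * z a

lemma dProd_torus {n : ℕ} (z : Fin n → ℂ) (θ : Fin n → ℝ) :
    dProd z (fun a => I * (θ a : ℂ) * z a) = I * (∏ j, z j) * ((∑ a, θ a : ℝ) : ℂ) := by
  unfold dProd
  push_cast
  rw [Finset.mul_sum]
  refine Finset.sum_congr rfl fun a _ => ?_
  rw [← cof_mul z a]
  ring

/-- Replacing row `k` of a matrix by its combination with coefficients `c` multiplies the
determinant by `c k`. -/
lemma det_updateRow_comb {n : ℕ} (M : Matrix (Fin n) (Fin n) ℂ) (c : Fin n → ℂ) (k : Fin n) :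
    (M.updateRow k (fun b => ∑ a, c a * M a b)).det = c k * M.det := by
  have h := Matrix.det_updateRow_sum M k c
  rw [smul_eq_mul] at h
  rw [← h]
  congr 2
  ext b
  simp [Finset.sum_apply]

/-- Replacing row `k` by the combination of the rows with coefficients `cof z` gives `dProd z w` at
position `(k, k)` and zeros elsewhere in row `k`, and multiplies the determinant by `cof z k`; in the
new matrix the only nonzero entries off the diagonal lie in column `k`. -/
lemma det_torusMat {n : ℕ} (z w : Fin n → ℂ) (k : Fin n) (hk : cof z k ≠ 0) :
    (torusMat z w k).det = I ^ (n - 1) * dProd z w := by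
  have h := det_updateRow_comb (torusMat z w k) (cof z) k
  set P := (torusMat z w k).updateRow k (fun b => ∑ a, cof z a * torusMat z w k a b) with hP
  have hkk : P k k = dProd z w := by
    simp [hP, torusMat, dProd]
  have hkj : ∀ j, j ≠ k → P k j = 0 := by
    intro j hj
    have := dProd_torus z (Pi.single j 1 - Pi.single k 1)
    simp only [Pi.sub_apply, Finset.sum_sub_distrib, Finset.sum_pi_single', Finset.mem_univ,
      if_true, sub_self, ofReal_zero, mul_zero] at this
    simpa [hP, torusMat, dProd, hj] using this
  have haj : ∀ a j, a ≠ k → j ≠ k → P a j = if a = j then I * z j else 0 := by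
    intro a j ha hj
    by_cases haj : a = j
    · subst haj
      simp [hP, torusMat, hj]
    · simp [hP, torusMat, hj, ha, haj]
  have hdet : P.det = dProd z w * (I ^ (n - 1) * cof z k) := by
    rw [Matrix.det_apply, Finset.sum_eq_single 1]
    · rw [Equiv.Perm.sign_one, one_smul, ← Finset.mul_prod_erase _ _ (Finset.mem_univ k)]
      simp only [Equiv.Perm.coe_one, id]
      rw [hkk]
      congr 1
      rw [Finset.prod_congr rfl (g := fun j => I * z j)]
      · rw [Finset.prod_mul_distrib]
        simp [cof]
      · intro j hj
        have := Finset.ne_of_mem_erase hj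
        simp [haj j j this this]
    · intro σ _ hσ
      -- A nontrivial permutation moves some index other than `k`, where `P` has a zero entry.
      obtain ⟨a, hak, ha⟩ : ∃ a, a ≠ k ∧ σ a ≠ a := by
        by_contra! hcon
        apply hσ
        ext a
        by_cases hak : a = k
        · subst hak
          by_contra hne
          have h1 : σ a ≠ a := fun h' => hne (by simp [h'])
          exact h1 (σ.injective (hcon _ h1))
        · simp [hcon a hak]
      rw [Finset.prod_eq_zero (Finset.mem_univ a), smul_zero]
      by_cases hs : σ a = k
      · rw [hs]
        exact hkj a hak
      · rw [haj _ _ hs hak, if_neg ha]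
    · simp
  apply mul_left_cancel₀ hk
  rw [← h, hdet]
  ring

/-- `f` is constant along orbits of the torus `{θ : ∑ θ_a = 0}`. -/
lemma slFib_torus {n : ℕ} (φ : (Fin n → ℝ) → ℝ) (z : Fin n → ℂ) (θ : Fin n → ℝ)
    (hθ : ∑ a, θ a = 0) (t : ℝ) :
    slFib φ (fun a => exp ((t : ℂ) * (I * (θ a : ℂ))) * z a) = slFib φ z := by
  have hn : ∀ a, normSq (exp ((t : ℂ) * (I * (θ a : ℂ))) * z a) = normSq (z a) := by
    intro a
    rw [map_mul, normSq_eq_norm_sq, show (t : ℂ) * (I * (θ a : ℂ)) = ((t * θ a : ℝ) : ℂ) * I by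
      push_cast; ring, norm_exp_ofReal_mul_I]
    simp
  have hs : sqNorms (fun a => exp ((t : ℂ) * (I * (θ a : ℂ))) * z a) = sqNorms z :=
    funext hn
  have hp : ∏ a, exp ((t : ℂ) * (I * (θ a : ℂ))) * z a = ∏ a, z a := by
    rw [Finset.prod_mul_distrib, ← exp_sum, ← Finset.mul_sum, ← Finset.mul_sum]
    have : (∑ a, (θ a : ℂ)) = 0 := by exact_mod_cast hθ
    simp [this]
  funext b
  simp only [slFib, Ham, hs, hn, hp]

lemma fderiv_slFib_torus {n : ℕ} (φ : (Fin n → ℝ) → ℝ) (z : Fin n → ℂ) (θ : Fin n → ℝ)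
    (hθ : ∑ a, θ a = 0) (hd : DifferentiableAt ℝ (slFib φ) z) :
    fderiv ℝ (slFib φ) z (fun a => I * (θ a : ℂ) * z a) = 0 := by
  set γ : ℝ → Fin n → ℂ := fun t a => exp ((t : ℂ) * (I * (θ a : ℂ))) * z a with hγ
  have h0 : γ 0 = z := by
    funext a
    simp [hγ]
  have hγ' : HasDerivAt γ (fun a => I * (θ a : ℂ) * z a) 0 := by
    rw [hasDerivAt_pi]
    intro a
    have h1 : HasDerivAt (fun t : ℝ => (t : ℂ) * (I * (θ a : ℂ))) (1 * (I * (θ a : ℂ))) 0 :=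
      (ofRealCLM.hasDerivAt (x := (0 : ℝ))).mul_const _
    have h2 := h1.cexp.mul_const (z a)
    simpa using h2
  have hf : HasFDerivAt (slFib φ) (fderiv ℝ (slFib φ) z) (γ 0) := by
    rw [h0]
    exact hd.hasFDerivAt
  have h1 := hf.comp_hasDerivAt (0 : ℝ) hγ'
  have h2 : (slFib φ ∘ γ) = fun _ => slFib φ z := by
    funext t
    exact slFib_torus φ z θ hθ t
  rw [h2] at h1
  exact h1.unique (hasDerivAt_const _ _)

lemma fderiv_slFib_last {n : ℕ} (φ : (Fin n → ℝ) → ℝ) (z : Fin n → ℂ)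
    (hd : DifferentiableAt ℝ (slFib φ) z) (b : Fin n) (hb : ¬ (b : ℕ) + 1 < n) (v : Fin n → ℂ) :
    fderiv ℝ (slFib φ) z v b = (I ^ (n + 1) * dProd z v).im := by
  have h1 : HasFDerivAt (fun y => slFib φ y b)
      ((ContinuousLinearMap.proj b).comp (fderiv ℝ (slFib φ) z)) z :=
    (hasFDerivAt_pi'.1 hd.hasFDerivAt) b
  have h2 : HasFDerivAt (𝕜 := ℝ) (fun y : Fin n → ℂ => ∏ j, y j)
      (∑ i, (∏ j ∈ Finset.univ.erase i, z j) •
        (ContinuousLinearMap.proj i : (Fin n → ℂ) →L[ℝ] ℂ)) z :=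
    HasFDerivAt.finsetProd fun i _ => hasFDerivAt_apply i z
  have h3 := (imCLM.hasFDerivAt).comp z (h2.const_mul (I ^ (n + 1)))
  have h4 : (fun y => slFib φ y b) = imCLM ∘ fun y : Fin n → ℂ => I ^ (n + 1) * ∏ j, y j := by
    funext y
    simp [slFib, hb]
  rw [h4] at h1
  have h5 := congrArg (fun A : (Fin n → ℂ) →L[ℝ] ℝ => A v) (h1.unique h3)
  simpa [dProd, cof] using h5

/-- The 'special' part of Corollary 1.3: at a point where `Df(z)` is surjective,
`Im Ω = Im dz₁∧⋯∧dzₙ` vanishes on the kernel of `Df(z)`: for `v₁,…,vₙ ∈ ker Df(z)`,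
`Im det(M) = 0` where `M_{ab}` is the `a`-th coordinate of `v_b`. -/
theorem fibres_are_special {n : ℕ}
    (V : Set (Fin n → ℝ)) (hV : IsOpen V)
    (φ : (Fin n → ℝ) → ℝ) (hφ : ContDiffOn ℝ 2 φ V)
    (hpos : ∀ z : Fin n → ℂ, sqNorms z ∈ V → (hermMat φ z).PosDef)
    (z : Fin n → ℂ) (hz : sqNorms z ∈ V)
    (hsurj : Function.Surjective ⇑(fderiv ℝ (slFib φ) z))
    (v : Fin n → (Fin n → ℂ))
    (hv : ∀ b, fderiv ℝ (slFib φ) z (v b) = 0) :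
    (Matrix.of fun a b : Fin n => v b a).det.im = 0 := by
  rcases Nat.eq_zero_or_pos n with rfl | hn
  · simp
  let l : Fin n := ⟨n - 1, by omega⟩
  have hl : ¬ (l : ℕ) + 1 < n := by simp only [l]; omega
  obtain ⟨u, hu⟩ := hsurj (fun _ => 1)
  have hul := congrFun hu l
  -- `fderiv` is zero where `f` is not differentiable, which surjectivity excludes.
  have hd : DifferentiableAt ℝ (slFib φ) z := by
    by_contra hnd
    simp [fderiv_zero_of_not_differentiableAt hnd] at hul
  rw [fderiv_slFib_last φ z hd l hl] at hul
  obtain ⟨k, hk⟩ : ∃ k, cof z k ≠ 0 := by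
    by_contra! hcon
    simp [dProd, hcon] at hul
  set L := LinearMap.ker (fderiv ℝ (slFib φ) z : (Fin n → ℂ) →ₗ[ℝ] (Fin n → ℝ)) with hL
  have hreal : ∀ w ∈ L, (I ^ (n + 1) * dProd z w).im = 0 := by
    intro w hw
    rw [← fderiv_slFib_last φ z hd l hl]
    exact congrFun (LinearMap.mem_ker.1 hw) l
  have hdim : Module.finrank ℝ L = n := by
    have h := LinearMap.finrank_range_add_finrank_ker
      (fderiv ℝ (slFib φ) z : (Fin n → ℂ) →ₗ[ℝ] (Fin n → ℝ))
    rw [LinearMap.range_eq_top.2 hsurj, finrank_top, Module.finrank_pi_fintype,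
      Module.finrank_pi_fintype] at h
    simp only [Complex.finrank_real_complex, Module.finrank_self, Finset.sum_const,
      Finset.card_univ, Fintype.card_fin, smul_eq_mul] at h
    change n * 1 + Module.finrank ℝ L = n * 2 at h
    omega
  by_cases hw : ∃ w ∈ L, dProd z w ≠ 0
  · obtain ⟨w, hwL, hw⟩ := hw
    set N := torusMat z w k with hN
    have hdet : N.det = I ^ (n - 1) * dProd z w := det_torusMat z w k hk
    have hNL : ∀ j, N.col j ∈ L := by
      intro j
      by_cases hj : j = k
      · convert hwL using 1
        funext a
        simp [hN, torusMat, hj, Matrix.col]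
      · have := fderiv_slFib_torus φ z (Pi.single j 1 - Pi.single k 1) (by simp) hd
        have hcol : N.col j = fun a =>
            I * (((Pi.single j 1 - Pi.single k 1 : Fin n → ℝ) a : ℝ) : ℂ) * z a := by
          funext a
          simp [hN, torusMat, hj, Matrix.col]
        rw [hcol]
        exact this
    have hli : LinearIndependent ℝ N.col := by
      have hunit : IsUnit N := by
        rw [Matrix.isUnit_iff_isUnit_det, hdet]
        exact (mul_ne_zero (pow_ne_zero _ I_ne_zero) hw).isUnit
      exact (Matrix.linearIndependent_cols_iff_isUnit.2 hunit).restrict_scalars' ℝ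
    let B : Fin n → L := fun j => ⟨N.col j, hNL j⟩
    have hB : LinearIndependent ℝ B := LinearIndependent.of_comp L.subtype hli
    have hspan := hB.span_eq_top_of_card_eq_finrank' (by simp [hdim])
    have hc : ∀ b, ∃ c : Fin n → ℝ, ∑ j, c j • N.col j = v b := by
      intro b
      have hvb : (⟨v b, LinearMap.mem_ker.2 (hv b)⟩ : L) ∈ Submodule.span ℝ (Set.range B) := by
        rw [hspan]
        trivial
      obtain ⟨c, hc⟩ := (Submodule.mem_span_range_iff_exists_fun ℝ).1 hvb
      refine ⟨c, ?_⟩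
      have := congrArg L.subtype hc
      simpa [B] using this
    choose c hc using hc
    have hM : (Matrix.of fun a b : Fin n => v b a)
        = N * (Matrix.of fun j b => c b j).map Complex.ofRealHom := by
      ext a b
      rw [Matrix.of_apply, ← hc b]
      simp [Matrix.mul_apply, Matrix.col, mul_comm]
    have hNreal : N.det.im = 0 := by
      have h1 := hreal w hwL
      have h2 : I ^ (n + 1) = -I ^ (n - 1) := by
        rw [show n + 1 = (n - 1) + 2 by omega, pow_add, I_sq]
        ring
      rw [h2, neg_mul, ← hdet, neg_im, neg_eq_zero] at h1
      exact h1
    rw [hM, Matrix.det_mul, ← RingHom.mapMatrix_apply, ← RingHom.map_det, Complex.mul_im, hNreal]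
    simp
  · push Not at hw
    have h := det_updateRow_comb (Matrix.of fun a b : Fin n => v b a) (cof z) k
    rw [Matrix.det_eq_zero_of_row_eq_zero k] at h
    · rcases mul_eq_zero.1 h.symm with h | h
      · exact absurd h hk
      · simp [h]
    · intro b
      have := hw (v b) (LinearMap.mem_ker.2 (hv b))
      simpa [dProd] using this
end
end

section
/- Let n ≥ 1 and let c : ℤⁿ → ℂ be a finitely supported function, not identically zero. Suppose the associated Laurent polynomial function F : (ℂ∖{0})ⁿ → ℂ, F(z) = Σ_{a ∈ ℤⁿ} c(a)·z₁^{a₁}⋯zₙ^{aₙ}, has no zeros on (ℂ∖{0})ⁿ. Then c is supported at exactly one point: there exist a₀ ∈ ℤⁿ and λ ∈ ℂ∖{0} such that F(z) = λ·z₁^{a₀,₁}⋯zₙ^{a₀,ₙ} for all z ∈ (ℂ∖{0})ⁿ. (This is the key step in the proof of Proposition 2.1: a nowhere-vanishing regular function on the algebraic torus (ℂ*)ⁿ is a constant times a character, i.e. a monomial.) -/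
/-!
A Laurent polynomial with at least two terms is restricted to a one-parameter subgroup
`t ↦ (t ^ m₁, …, t ^ mₙ)` of the torus. If `m ∈ ℤⁿ` is chosen so that `a ↦ ⟨a, m⟩` is injective on
the support (`exists_separating_weight`), no terms cancel, so the restriction is a one-variable
Laurent polynomial with at least two terms. Over `ℂ` such a function has a nonzero root
(`exists_ne_zero_root`): after clearing denominators and dividing by a power of `X`, either a
nonconstant polynomial with nonzero constant term remains, or the polynomial was a monomial.
Hence a nowhere-vanishing Laurent polynomial has exactly one term.
-/

open Complex

/-- A polynomial over `ℂ` without nonzero roots is a monomial. -/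
lemma eq_C_mul_X_pow_of_no_root (P : Polynomial ℂ) (hP : P ≠ 0)
    (h : ∀ t : ℂ, t ≠ 0 → P.eval t ≠ 0) :
    ∃ (q : ℂ) (k : ℕ), P = Polynomial.C q * Polynomial.X ^ k := by
  obtain ⟨Q, hQ, hX⟩ := Polynomial.exists_eq_pow_rootMultiplicity_mul_and_not_dvd P hP 0
  rw [Polynomial.dvd_iff_isRoot] at hX
  have hdeg : Q.degree ≤ 0 := by
    by_contra hd
    obtain ⟨r, hr⟩ := Complex.exists_root (not_le.mp hd)
    have hr0 : r ≠ 0 := by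
      rintro rfl
      exact hX hr
    apply h r hr0
    rw [hQ, Polynomial.eval_mul, hr.eq_zero, mul_zero]
  rw [Polynomial.eq_C_of_degree_le_zero hdeg, Polynomial.C_0, sub_zero, mul_comm] at hQ
  exact ⟨_, _, hQ⟩

/-- Two distinct exponents `e a`, `e b` cannot cancel because `e` is injective on `s`, so the
one-variable Laurent polynomial has at least two terms and hence a root in `ℂ ∖ {0}`. -/
lemma exists_ne_zero_root {ι : Type*} (s : Finset ι) (c : ι → ℂ) (e : ι → ℤ)
    (he : Set.InjOn e s) (hc : ∀ a ∈ s, c a ≠ 0) {a b : ι} (ha : a ∈ s) (hb : b ∈ s)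
    (hab : a ≠ b) : ∃ t : ℂ, t ≠ 0 ∧ ∑ i ∈ s, c i * t ^ e i = 0 := by
  classical
  by_contra! h
  -- Multiplying by `t ^ K` makes every exponent on `s` nonnegative.
  set K : ℤ := ∑ i ∈ s, |e i| with hK
  have hpos : ∀ i ∈ s, 0 ≤ e i + K := fun i hi => by
    have h1 : |e i| ≤ K := Finset.single_le_sum (fun j _ => abs_nonneg (e j)) hi
    have h2 := neg_abs_le (e i)
    linarith
  set P : Polynomial ℂ := ∑ i ∈ s, Polynomial.C (c i) * Polynomial.X ^ (e i + K).toNat with hPdef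
  have hcoeff : ∀ i ∈ s, P.coeff (e i + K).toNat = c i := by
    intro i hi
    rw [hPdef, Polynomial.finsetSum_coeff, Finset.sum_eq_single i]
    · simp
    · intro j hj hji
      have hne : (e i + K).toNat ≠ (e j + K).toNat := by
        intro heq
        have h1 := hpos i hi
        have h2 := hpos j hj
        exact hji (he hj hi (by omega))
      simp [Polynomial.coeff_X_pow, hne]
    · exact fun hn => absurd hi hn
  have hP0 : P ≠ 0 := by
    intro h0
    have := hcoeff a ha
    rw [h0, Polynomial.coeff_zero] at this
    exact hc a ha this.symm
  have heval : ∀ t : ℂ, t ≠ 0 → P.eval t ≠ 0 := by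
    intro t ht
    have key : P.eval t = t ^ K * ∑ i ∈ s, c i * t ^ e i := by
      rw [hPdef, Polynomial.eval_finsetSum, Finset.mul_sum]
      refine Finset.sum_congr rfl fun i hi => ?_
      have h3 : t ^ (e i + K).toNat = t ^ e i * t ^ K := by
        rw [← zpow_natCast, Int.toNat_of_nonneg (hpos i hi), zpow_add₀ ht]
      simp only [Polynomial.eval_mul, Polynomial.eval_C, Polynomial.eval_pow, Polynomial.eval_X, h3]
      ring
    rw [key]
    exact mul_ne_zero (zpow_ne_zero _ ht) (h t ht)
  obtain ⟨q, k, hq⟩ := eq_C_mul_X_pow_of_no_root P hP0 heval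
  have hk : ∀ i ∈ s, (e i + K).toNat = k := by
    intro i hi
    by_contra hne
    have := hcoeff i hi
    rw [hq] at this
    simp [Polynomial.coeff_X_pow, hne] at this
    exact hc i hi this.symm
  have h1 := hpos a ha
  have h2 := hpos b hb
  have h3 := hk a ha
  have h4 := hk b hb
  exact hab (he ha hb (by omega))

/-- Some integer weight separates the points of a finite subset of `ℤⁿ`: the product of the nonzero
linear forms `⟨a - b, X⟩` is a nonzero polynomial over the infinite domain `ℤ`, so it is nonzero at
some integer point. -/
lemma exists_separating_weight {n : ℕ} (s : Finset (Fin n → ℤ)) :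
    ∃ m : Fin n → ℤ, Set.InjOn (fun a : Fin n → ℤ => ∑ j, m j * a j) s := by
  classical
  let L : (Fin n → ℤ) → MvPolynomial (Fin n) ℤ := fun d => ∑ j, MvPolynomial.C (d j) * MvPolynomial.X j
  have hL : ∀ d m, MvPolynomial.eval m (L d) = ∑ j, d j * m j := fun d m => by simp [L]
  have hL0 : ∀ d, d ≠ 0 → L d ≠ 0 := by
    intro d hd h0
    apply hd
    funext j
    have := hL d (Pi.single j 1)
    simpa [h0, Pi.single_apply] using this.symm
  have hprod : ∏ p ∈ s.offDiag, L (p.1 - p.2) ≠ 0 := by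
    refine Finset.prod_ne_zero_iff.mpr fun p hp => hL0 _ ?_
    exact sub_ne_zero.mpr (Finset.mem_offDiag.mp hp).2.2
  obtain ⟨m, hm⟩ : ∃ m, MvPolynomial.eval m (∏ p ∈ s.offDiag, L (p.1 - p.2)) ≠ 0 := by
    by_contra! h
    exact hprod (MvPolynomial.funext fun x => by rw [h x, map_zero])
  rw [map_prod, Finset.prod_ne_zero_iff] at hm
  refine ⟨m, fun a ha b hb hab => ?_⟩
  by_contra hne
  apply hm (a, b) (Finset.mem_offDiag.mpr ⟨ha, hb, hne⟩)
  rw [hL]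
  simp only [Pi.sub_apply, sub_mul, Finset.sum_sub_distrib]
  simp only [mul_comm (m _)] at hab
  exact sub_eq_zero.mpr hab

/-- A nowhere-vanishing Laurent polynomial function on the algebraic torus `(ℂ*)ⁿ` is a
constant times a character, i.e. a monomial (key step in the proof of Proposition 2.1). -/
theorem nonvanishing_laurent_is_monomial (n : ℕ) (hn : 1 ≤ n)
    (c : (Fin n → ℤ) →₀ ℂ) (hc : c ≠ 0)
    (hF : ∀ z : Fin n → ℂ, (∀ j, z j ≠ 0) →
        (∑ a ∈ c.support, c a * ∏ j, z j ^ (a j)) ≠ 0) :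
    ∃ (a₀ : Fin n → ℤ) (lam : ℂ), lam ≠ 0 ∧
      ∀ z : Fin n → ℂ, (∀ j, z j ≠ 0) →
        (∑ a ∈ c.support, c a * ∏ j, z j ^ (a j)) = lam * ∏ j, z j ^ (a₀ j) := by
  obtain ⟨a₀, ha₀⟩ := Finsupp.support_nonempty_iff.mpr hc
  have hsupp : c.support = {a₀} := by
    refine Finset.eq_singleton_iff_unique_mem.mpr ⟨ha₀, fun b hb => ?_⟩
    by_contra hne
    obtain ⟨m, hm⟩ := exists_separating_weight c.support
    obtain ⟨t, ht, h0⟩ := exists_ne_zero_root c.support c (fun a => ∑ j, m j * a j) hm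
      (fun a ha => Finsupp.mem_support_iff.mp ha) hb ha₀ hne
    apply hF (fun j => t ^ m j) (fun j => zpow_ne_zero _ ht)
    rw [← h0]
    refine Finset.sum_congr rfl fun a _ => ?_
    congr 1
    have hsum : ∀ u : Finset (Fin n), ∏ j ∈ u, (t ^ m j) ^ a j = t ^ ∑ j ∈ u, m j * a j := by
      intro u
      induction u using Finset.induction_on with
      | empty => simp
      | insert j u hj ih =>
        rw [Finset.prod_insert hj, Finset.sum_insert hj, ih, zpow_add₀ ht, zpow_mul]
    exact hsum _
  refine ⟨a₀, c a₀, Finsupp.mem_support_iff.mp ha₀, fun z _ => ?_⟩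
  rw [hsupp, Finset.sum_singleton]
end
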